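/- arXiv:1310.1484 — 5 statements merged into one kernel-verified Lean document; each statement's English description precedes it below -/
import Mathlib

section
/- Let H be a complex Hilbert space and let n ≥ 1 and k_1,…,k_n be positive integers. There exists a constant C > 0, depending only on k_1 + ⋯ + k_n, with the following property. Suppose for each i = 1,…,n that {Π^{(i)}_α}_{α=1}^{k_i} are bounded self-adjoint projections on H with Π^{(i)}_α Π^{(i)}_β = 0 for α ≠ β and Σ_{α=1}^{k_i} Π^{(i)}_α = 1, and suppose ε > 0 satisfies C·ε < 1 and ‖[Π^{(i)}_{α_i}, Q^n_{i+1}(α)]‖ < ε for every multi-index α = (α_1,…,α_n) and every i = 1,…,n−1. Then there exist self-adjoint projections Π̃^{(i)}_α (α = 1,…,k_i, i = 1,…,n) satisfying Π̃^{(i)}_α Π̃^{(i)}_β = 0 for α ≠ β, Σ_{α=1}^{k_i} Π̃^{(i)}_α = 1, ‖Π̃^{(i)}_α − Π^{(i)}_α‖ ≤ C·ε for all i, α, and [Π̃^{(i)}_{α_i}, Q̃^n_{i+1}(α)] = 0 for every multi-index α and every i = 1,…,n−1, where Q̃^n_{i+1}(α) is built from the Π̃'s in the same way Q^n_{i+1}(α)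 is built from the Π's. -/
universe u

/-- The history operator `H^n_j(α) = Π^{(n-1)}_{α_{n-1}} ⋯ Π^{(j)}_{α_j}`
(0-based indexing), with `histOp n k P α n = 1`. -/
noncomputable def histOp {M : Type*} [Monoid M] (n : ℕ) (k : Fin n → ℕ)
    (P : (i : Fin n) → Fin (k i) → M) (α : (i : Fin n) → Fin (k i)) (j : ℕ) : M :=
  if h : j < n then histOp n k P α (j + 1) * P ⟨j, h⟩ (α ⟨j, h⟩) else 1
termination_by n - j
decreasing_by omega

/-- The operator `Q^n_j(α) = H^n_j(α)* H^n_j(α)` on a complex Hilbert space. -/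
noncomputable def Qop {H : Type*} [NormedAddCommGroup H] [InnerProductSpace ℂ H]
    [CompleteSpace H] (n : ℕ) (k : Fin n → ℕ)
    (P : (i : Fin n) → Fin (k i) → (H →L[ℂ] H)) (α : (i : Fin n) → Fin (k i)) (j : ℕ) :
    H →L[ℂ] H :=
  star (histOp n k P α j) * histOp n k P α j

lemma one_le_abs_fin_sub {k : ℕ} {a b : Fin k} (hab : a ≠ b) : (1 : ℝ) ≤ |(a : ℝ) - b| := by
  have h0 : ((a : ℕ) : ℤ) - ((b : ℕ) : ℤ) ≠ 0 := fun h => hab (Fin.ext (by omega))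
  exact_mod_cast Int.one_le_abs h0

/-- A finite complete system of mutually orthogonal self-adjoint projections. -/
structure IsProjectionResolution {A ι : Type*} [Ring A] [StarRing A] [Fintype ι]
    (P : ι → A) : Prop where
  isSelfAdjoint : ∀ a, IsSelfAdjoint (P a)
  mul_eq_zero : ∀ a b, a ≠ b → P a * P b = 0
  mul_self : ∀ a, P a * P a = P a
  sum_eq_one : ∑ a, P a = 1

namespace IsProjectionResolution

variable {A : Type*} [CStarAlgebra A]

lemma norm_le_one {ι : Type*} [Fintype ι] {P : ι → A} (hP : IsProjectionResolution P) (a : ι) :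
    ‖P a‖ ≤ 1 :=
  IsStarProjection.norm_le _ ⟨hP.mul_self a, hP.isSelfAdjoint a⟩

lemma sum_smul_mul {ι : Type*} [Fintype ι] {P : ι → A} (hP : IsProjectionResolution P)
    (c : ι → ℝ) (b : ι) : (∑ a, c a • P a) * P b = c b • P b := by
  classical
  rw [Finset.sum_mul, Finset.sum_eq_single b]
  · rw [smul_mul_assoc, hP.mul_self]
  · intro a _ hab
    rw [smul_mul_assoc, hP.mul_eq_zero a b hab, smul_zero]
  · simp

lemma sum_smul_mul_sum_smul {ι : Type*} [Fintype ι] {P : ι → A}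
    (hP : IsProjectionResolution P) (c d : ι → ℝ) :
    (∑ a, c a • P a) * (∑ a, d a • P a) = ∑ a, (c a * d a) • P a := by
  rw [Finset.mul_sum]
  refine Finset.sum_congr rfl fun b _ => ?_
  rw [mul_smul_comm, hP.sum_smul_mul, smul_smul, mul_comm]

/-- A small perturbation of `∑ a, a • P a` has spectrum close to the labels `a`. -/
lemma exists_abs_sub_lt_of_mem_spectrum {k : ℕ} {P : Fin k → A} (hP : IsProjectionResolution P)
    {Y : A} (hY : 4 * (k : ℝ) * ‖Y - ∑ a : Fin k, (a : ℝ) • P a‖ < 1)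
    {x : ℝ} (hx : x ∈ spectrum ℝ Y) : ∃ a : Fin k, |x - a| < 1 / 4 := by
  by_contra! hfar
  set T : A := ∑ a : Fin k, (a : ℝ) • P a with hT
  set R : A := ∑ a : Fin k, (x - a)⁻¹ • P a with hR
  have hne : ∀ a : Fin k, x - a ≠ 0 := fun a h => by
    have := hfar a
    rw [h, abs_zero] at this
    norm_num at this
  have hsub : algebraMap ℝ A x - T = ∑ a : Fin k, (x - a) • P a := by
    simp only [sub_smul, Finset.sum_sub_distrib, ← Finset.smul_sum, hP.sum_eq_one, hT,
      Algebra.algebraMap_eq_smul_one]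
  have hone : (∑ a : Fin k, (1 : ℝ) • P a) = 1 := by simp [hP.sum_eq_one]
  have hTR : (algebraMap ℝ A x - T) * R = 1 := by
    rw [hsub, hR, hP.sum_smul_mul_sum_smul, ← hone]
    exact Finset.sum_congr rfl fun a _ => by rw [mul_inv_cancel₀ (hne a)]
  have hRT : R * (algebraMap ℝ A x - T) = 1 := by
    rw [hsub, hR, hP.sum_smul_mul_sum_smul, ← hone]
    exact Finset.sum_congr rfl fun a _ => by rw [inv_mul_cancel₀ (hne a)]
  have hRn : ‖R‖ ≤ 4 * k := by
    refine (norm_sum_le_of_le (n := fun _ => (4 : ℝ)) _ fun a _ => ?_).trans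
      (by simp [mul_comm])
    rw [norm_smul, norm_inv, Real.norm_eq_abs]
    have h4 : |x - a|⁻¹ ≤ 4 := by
      have := inv_anti₀ (by norm_num) (hfar a)
      norm_num at this
      exact this
    have := mul_le_mul h4 (hP.norm_le_one a) (norm_nonneg _) (by norm_num)
    linarith
  have hlt : ‖R * (Y - T)‖ < 1 := by
    refine (norm_mul_le _ _).trans_lt (lt_of_le_of_lt ?_ hY)
    gcongr
  rw [spectrum.mem_iff] at hx
  refine hx ?_
  have hfac : algebraMap ℝ A x - Y = (algebraMap ℝ A x - T) * (1 - R * (Y - T)) := by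
    rw [mul_sub, ← mul_assoc, hTR]
    noncomm_ring
  rw [hfac]
  exact IsUnit.mul ⟨⟨_, R, hTR, hRT⟩, rfl⟩ (isUnit_one_sub_of_norm_lt_one hlt)

/-- A self-adjoint element near `∑ a, a • P a` has spectral projections near those of `P`. -/
lemma exists_near_of_isSelfAdjoint {k : ℕ} {P : Fin k → A} (hP : IsProjectionResolution P)
    {Y : A} (hYsa : IsSelfAdjoint Y)
    (hY : 4 * (k : ℝ) * ‖Y - ∑ a : Fin k, (a : ℝ) • P a‖ < 1) :
    ∃ E : Fin k → A, IsProjectionResolution E ∧ (∀ Z, Commute Y Z → ∀ a, Commute (E a) Z) ∧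
      ∀ a, ‖E a - P a‖ ≤ 4 * (k : ℝ) * ‖Y - ∑ a : Fin k, (a : ℝ) • P a‖ := by
  set T : A := ∑ a : Fin k, (a : ℝ) • P a with hT
  let f : Fin k → ℝ → ℝ := fun a x => max 0 (min 1 (2 - 4 * |x - a|))
  have hfc : ∀ a, Continuous (f a) := fun a => by fun_prop
  have hspec : ∀ x ∈ spectrum ℝ Y, ∃ a : Fin k, |x - a| < 1 / 4 ∧ f a x = 1 ∧
      ∀ b, b ≠ a → f b x = 0 := by
    intro x hx
    obtain ⟨a, ha⟩ := hP.exists_abs_sub_lt_of_mem_spectrum hY hx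
    refine ⟨a, ha, ?_, fun b hb => ?_⟩
    · simp only [f]
      rw [min_eq_left (by linarith), max_eq_right zero_le_one]
    · have hab : (1 : ℝ) ≤ |(a : ℝ) - b| := one_le_abs_fin_sub hb.symm
      have htri : |(a : ℝ) - b| ≤ |x - a| + |x - b| := by
        have := abs_sub_le (a : ℝ) x b
        rwa [abs_sub_comm (a : ℝ) x] at this
      simp only [f]
      exact max_eq_left ((min_le_right _ _).trans (by linarith))
  have hE : IsProjectionResolution fun a => cfc (f a) Y := by
    refine ⟨fun a => cfc_predicate _ _, fun a b hab => ?_, fun a => ?_, ?_⟩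
    · rw [← cfc_mul (f a) (f b) Y (hfc a).continuousOn (hfc b).continuousOn, ← cfc_zero ℝ Y]
      refine cfc_congr fun x hx => ?_
      obtain ⟨c, -, -, hc⟩ := hspec x hx
      by_cases h : a = c
      · simp [hc b fun h' => hab (h.trans h'.symm)]
      · simp [hc a h]
    · rw [← cfc_mul (f a) (f a) Y (hfc a).continuousOn (hfc a).continuousOn]
      refine cfc_congr fun x hx => ?_
      obtain ⟨c, -, hc1, hc⟩ := hspec x hx
      by_cases h : a = c
      · simp [h, hc1]
      · simp [hc a h]
    · rw [← cfc_sum_univ f Y fun a => (hfc a).continuousOn, ← cfc_one ℝ Y]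
      refine cfc_congr fun x hx => ?_
      obtain ⟨c, -, hc1, hc⟩ := hspec x hx
      rw [Finset.sum_apply, Finset.sum_eq_single c (fun b _ hb => hc b hb) (by simp), hc1]
      rfl
  refine ⟨fun a => cfc (f a) Y, hE, fun Z hZ a => hZ.cfc_real _, ?_⟩
  set E : Fin k → A := fun a => cfc (f a) Y with hEdef
  have hYE : ∀ a, ‖E a * (Y - (a : ℝ) • 1)‖ ≤ 1 / 4 := by
    intro a
    have h1 : Y - (a : ℝ) • (1 : A) = cfc (fun x : ℝ => x - (a : ℝ)) Y := by
      rw [cfc_sub (fun x : ℝ => x) (fun _ => (a : ℝ)) Y, cfc_id' ℝ Y, cfc_const (a : ℝ) Y,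
        Algebra.algebraMap_eq_smul_one]
    rw [h1, hEdef]
    simp only
    rw [← cfc_mul (f a) (fun x : ℝ => x - (a : ℝ)) Y (hfc a).continuousOn]
    refine norm_cfc_le (by norm_num) fun x hx => ?_
    obtain ⟨c, hc0, hc1, hc⟩ := hspec x hx
    by_cases h : a = c
    · subst h
      rw [hc1, one_mul, Real.norm_eq_abs]
      exact hc0.le
    · rw [hc a h]
      norm_num
  have hoff : ∀ a b, a ≠ b → ‖E a * P b‖ ≤ 2 * ‖Y - T‖ := by
    intro a b hab
    have hid : ((a : ℝ) - b) • (E a * P b) =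
        E a * (Y - T) * P b - E a * (Y - (a : ℝ) • 1) * (E a * P b) := by
      have hc : E a * (Y - (a : ℝ) • 1) * (E a * P b) = E a * (Y - (a : ℝ) • 1) * P b := by
        have hcomm : Commute (E a) (Y - (a : ℝ) • (1 : A)) :=
          ((Commute.refl Y).cfc_real _).sub_right ((Commute.one_right _).smul_right _)
        rw [hcomm.eq, mul_assoc, ← mul_assoc (E a) (E a), hE.mul_self a, mul_assoc]
      rw [hc, mul_sub, sub_mul, mul_assoc (E a) T, hT, hP.sum_smul_mul, mul_sub, sub_mul,
        sub_smul]
      simp only [mul_smul_comm, mul_one, smul_mul_assoc]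
      abel
    have hone : (1 : ℝ) ≤ |(a : ℝ) - b| := one_le_abs_fin_sub hab
    have hn := congrArg norm hid
    rw [norm_smul, Real.norm_eq_abs] at hn
    have h1 : ‖E a * (Y - T) * P b‖ ≤ ‖Y - T‖ := by
      refine (norm_mul_le _ _).trans ?_
      refine (mul_le_of_le_one_right (norm_nonneg _) (hP.norm_le_one b)).trans ?_
      exact (norm_mul_le _ _).trans (mul_le_of_le_one_left (norm_nonneg _) (hE.norm_le_one a))
    have h2 : ‖E a * (Y - (a : ℝ) • 1) * (E a * P b)‖ ≤ 1 / 4 * ‖E a * P b‖ :=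
      (norm_mul_le _ _).trans (by gcongr; exact hYE a)
    have h3 := norm_sub_le (E a * (Y - T) * P b) (E a * (Y - (a : ℝ) • 1) * (E a * P b))
    have h4 : ‖E a * P b‖ ≤ |(a : ℝ) - b| * ‖E a * P b‖ :=
      le_mul_of_one_le_left (norm_nonneg _) hone
    linarith [norm_nonneg (Y - T)]
  intro a
  have hdecomp : E a - P a = ∑ b, (E a * P b - E b * P a) := by
    rw [Finset.sum_sub_distrib, ← Finset.mul_sum, ← Finset.sum_mul, hP.sum_eq_one,
      hE.sum_eq_one, mul_one, one_mul]
  rw [hdecomp]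
  refine (norm_sum_le_of_le (n := fun _ => 4 * ‖Y - T‖) _ fun b _ => ?_).trans
    (le_of_eq (by simp; ring))
  by_cases h : a = b
  · subst h
    simp
  · have := norm_sub_le (E a * P b) (E b * P a)
    linarith [hoff a b h, hoff b a (Ne.symm h)]

/-- A resolution that almost commutes with the resolution `Q` is close to a resolution that
commutes with `Q` exactly. -/
lemma exists_commute_of_norm_commutator_le {ι : Type*} [Fintype ι] {k : ℕ} {P : Fin k → A}
    {Q : ι → A} (hP : IsProjectionResolution P) (hQ : IsProjectionResolution Q) {δ : ℝ}
    (hδ : ∀ a x, ‖P a * Q x - Q x * P a‖ ≤ δ)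
    (hsmall : 4 * (k : ℝ) * (Fintype.card ι * (k * (k * δ))) < 1) :
    ∃ E : Fin k → A, IsProjectionResolution E ∧ (∀ a x, Commute (E a) (Q x)) ∧
      ∀ a, ‖E a - P a‖ ≤ 4 * (k : ℝ) * (Fintype.card ι * (k * (k * δ))) := by
  set T : A := ∑ a : Fin k, (a : ℝ) • P a with hT
  set Y : A := ∑ x, Q x * T * Q x with hYdef
  have hTsa : IsSelfAdjoint T :=
    isSelfAdjoint_sum _ fun a _ => (IsSelfAdjoint.all (a : ℝ)).smul (hP.isSelfAdjoint a)
  have hYsa : IsSelfAdjoint Y := isSelfAdjoint_sum _ fun x _ => by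
    have := hTsa.conjugate (Q x)
    rwa [(hQ.isSelfAdjoint x).star_eq] at this
  have hcomm : ∀ x, Commute Y (Q x) := by
    classical
    intro x
    have hl : Y * Q x = Q x * T * Q x := by
      rw [hYdef, Finset.sum_mul, Finset.sum_eq_single x]
      · rw [mul_assoc, hQ.mul_self]
      · intro y _ hy
        rw [mul_assoc, hQ.mul_eq_zero y x hy, mul_zero]
      · simp
    have hr : Q x * Y = Q x * T * Q x := by
      rw [hYdef, Finset.mul_sum, Finset.sum_eq_single x]
      · rw [← mul_assoc, ← mul_assoc, hQ.mul_self]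
      · intro y _ hy
        rw [← mul_assoc, ← mul_assoc, hQ.mul_eq_zero x y hy.symm, zero_mul, zero_mul]
      · simp
    exact hl.trans hr.symm
  have hTQ : ∀ x, ‖T * Q x - Q x * T‖ ≤ k * (k * δ) := by
    intro x
    have : T * Q x - Q x * T = ∑ a : Fin k, (a : ℝ) • (P a * Q x - Q x * P a) := by
      simp only [hT, Finset.sum_mul, Finset.mul_sum, smul_sub, Finset.sum_sub_distrib,
        smul_mul_assoc, mul_smul_comm]
    rw [this]
    refine (norm_sum_le_of_le (n := fun _ => (k : ℝ) * δ) _ fun a _ => ?_).trans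
      (le_of_eq (by simp))
    rw [norm_smul, Real.norm_natCast]
    have : ((a : ℕ) : ℝ) ≤ k := by exact_mod_cast a.2.le
    gcongr
    exact hδ a x
  have hYT : ‖Y - T‖ ≤ Fintype.card ι * (k * (k * δ)) := by
    have : Y - T = ∑ x, Q x * (T * Q x - Q x * T) := by
      simp only [mul_sub, Finset.sum_sub_distrib, ← mul_assoc, hQ.mul_self]
      rw [← Finset.sum_mul, hQ.sum_eq_one, one_mul]
    rw [this]
    refine (norm_sum_le_of_le (n := fun _ => (k : ℝ) * (k * δ)) _ fun x _ => ?_).trans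
      (le_of_eq (by simp))
    exact (norm_mul_le _ _).trans
      ((mul_le_of_le_one_left (norm_nonneg _) (hQ.norm_le_one x)).trans (hTQ x))
  have hle : 4 * (k : ℝ) * ‖Y - T‖ ≤ 4 * (k : ℝ) * (Fintype.card ι * (k * (k * δ))) := by
    gcongr
  obtain ⟨E, hE, hEc, hEn⟩ := hP.exists_near_of_isSelfAdjoint hYsa (hle.trans_lt hsmall)
  exact ⟨E, hE, fun a x => hEc _ (hcomm x) a, fun a => (hEn a).trans hle⟩

end IsProjectionResolution

section History

lemma histOp_self {M : Type*} [Monoid M] (n : ℕ) (k : Fin n → ℕ)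
    (P : (i : Fin n) → Fin (k i) → M) (α : (i : Fin n) → Fin (k i)) : histOp n k P α n = 1 := by
  rw [histOp, dif_neg (lt_irrefl n)]

lemma histOp_succ_succ {M : Type*} [Monoid M] (n : ℕ) (k : Fin (n + 1) → ℕ)
    (P : (i : Fin (n + 1)) → Fin (k i) → M) (α : (i : Fin (n + 1)) → Fin (k i)) (j : ℕ) :
    histOp (n + 1) k P α (j + 1) =
      histOp n (fun i => k i.succ) (fun i => P i.succ) (fun i => α i.succ) j := by
  induction h : n - j generalizing j with
  | zero =>
    rw [histOp, histOp.eq_1 n, dif_neg (by omega), dif_neg (by omega)]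
  | succ d ih =>
    rw [histOp, histOp.eq_1 n, dif_pos (by omega), dif_pos (by omega), ih (j + 1) (by omega)]
    rfl

lemma histOp_succ_zero {M : Type*} [Monoid M] (n : ℕ) (k : Fin (n + 1) → ℕ)
    (P : (i : Fin (n + 1)) → Fin (k i) → M) (α : (i : Fin (n + 1)) → Fin (k i)) :
    histOp (n + 1) k P α 0 =
      histOp n (fun i => k i.succ) (fun i => P i.succ) (fun i => α i.succ) 0 * P 0 (α 0) := by
  rw [histOp, dif_pos (by omega), histOp_succ_succ]
  rfl

variable {A : Type*} [CStarAlgebra A]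

/-- The operator `Q^n_j(α)` in a C⋆-algebra. -/
noncomputable def histSq (n : ℕ) (k : Fin n → ℕ)
    (P : (i : Fin n) → Fin (k i) → A) (α : (i : Fin n) → Fin (k i)) (j : ℕ) : A :=
  star (histOp n k P α j) * histOp n k P α j

lemma histSq_self (n : ℕ) (k : Fin n → ℕ) (P : (i : Fin n) → Fin (k i) → A)
    (α : (i : Fin n) → Fin (k i)) : histSq n k P α n = 1 := by
  simp [histSq, histOp_self]

lemma histSq_succ_succ (n : ℕ) (k : Fin (n + 1) → ℕ)
    (P : (i : Fin (n + 1)) → Fin (k i) → A) (α : (i : Fin (n + 1)) → Fin (k i)) (j : ℕ) :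
    histSq (n + 1) k P α (j + 1) =
      histSq n (fun i => k i.succ) (fun i => P i.succ) (fun i => α i.succ) j := by
  rw [histSq, histOp_succ_succ, histSq]

lemma histSq_succ_zero (n : ℕ) (k : Fin (n + 1) → ℕ)
    (P : (i : Fin (n + 1)) → Fin (k i) → A) (α : (i : Fin (n + 1)) → Fin (k i)) :
    histSq (n + 1) k P α 0 = star (P 0 (α 0)) *
      histSq n (fun i => k i.succ) (fun i => P i.succ) (fun i => α i.succ) 0 * P 0 (α 0) := by
  simp only [histSq, histOp_succ_zero, star_mul, mul_assoc]

lemma norm_histOp_zero_le_one (n : ℕ) (k : Fin n → ℕ) {P : (i : Fin n) → Fin (k i) → A}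
    (hP : ∀ i, IsProjectionResolution (P i)) (α : (i : Fin n) → Fin (k i)) :
    ‖histOp n k P α 0‖ ≤ 1 := by
  induction n with
  | zero =>
    rw [histOp_self]
    exact IsStarProjection.norm_le _ (IsStarProjection.one A)
  | succ n ih =>
    rw [histOp_succ_zero]
    refine (norm_mul_le _ _).trans (mul_le_one₀ ?_ (norm_nonneg _) ((hP 0).norm_le_one _))
    exact ih _ (fun i => hP i.succ) _

lemma norm_histOp_zero_sub_le (n : ℕ) (k : Fin n → ℕ) {P P' : (i : Fin n) → Fin (k i) → A}
    (hP : ∀ i, IsProjectionResolution (P i)) (hP' : ∀ i, IsProjectionResolution (P' i)) {η : ℝ}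
    (hη : ∀ i a, ‖P' i a - P i a‖ ≤ η) (α : (i : Fin n) → Fin (k i)) :
    ‖histOp n k P' α 0 - histOp n k P α 0‖ ≤ n * η := by
  induction n with
  | zero => simp [histOp_self]
  | succ n ih =>
    rw [histOp_succ_zero, histOp_succ_zero]
    set X' := histOp n (fun i => k i.succ) (fun i => P' i.succ) (fun i => α i.succ) 0
    set X := histOp n (fun i => k i.succ) (fun i => P i.succ) (fun i => α i.succ) 0
    have hX : ‖X' - X‖ ≤ n * η :=
      ih (fun i => k i.succ) (fun i => hP i.succ) (fun i => hP' i.succ)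
        (fun i => hη i.succ) (fun i => α i.succ)
    have hX1 : ‖X‖ ≤ 1 := norm_histOp_zero_le_one n _ (fun i => hP i.succ) _
    have hid : X' * P' 0 (α 0) - X * P 0 (α 0) =
        (X' - X) * P' 0 (α 0) + X * (P' 0 (α 0) - P 0 (α 0)) := by noncomm_ring
    rw [hid]
    have h1 : ‖(X' - X) * P' 0 (α 0)‖ ≤ n * η := (norm_mul_le _ _).trans
      ((mul_le_of_le_one_right (norm_nonneg _) ((hP' 0).norm_le_one _)).trans hX)
    have h2 : ‖X * (P' 0 (α 0) - P 0 (α 0))‖ ≤ η := (norm_mul_le _ _).trans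
      ((mul_le_of_le_one_left (norm_nonneg _) hX1).trans (hη 0 (α 0)))
    push_cast
    linarith [norm_add_le ((X' - X) * P' 0 (α 0)) (X * (P' 0 (α 0) - P 0 (α 0)))]

lemma norm_histSq_zero_sub_le (n : ℕ) (k : Fin n → ℕ) {P P' : (i : Fin n) → Fin (k i) → A}
    (hP : ∀ i, IsProjectionResolution (P i)) (hP' : ∀ i, IsProjectionResolution (P' i)) {η : ℝ}
    (hη : ∀ i a, ‖P' i a - P i a‖ ≤ η) (α : (i : Fin n) → Fin (k i)) :
    ‖histSq n k P' α 0 - histSq n k P α 0‖ ≤ 2 * (n * η) := by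
  rw [histSq, histSq]
  have hX := norm_histOp_zero_sub_le n k hP hP' hη α
  have hX1 := norm_histOp_zero_le_one n k hP α
  have hX1' := norm_histOp_zero_le_one n k hP' α
  set X' := histOp n k P' α 0
  set X := histOp n k P α 0
  have hid : star X' * X' - star X * X = star (X' - X) * X' + star X * (X' - X) := by
    rw [star_sub]
    noncomm_ring
  rw [hid]
  have h1 : ‖star (X' - X) * X'‖ ≤ n * η := (norm_mul_le _ _).trans
    ((mul_le_of_le_one_right (norm_nonneg _) hX1').trans (by rwa [norm_star]))
  have h2 : ‖star X * (X' - X)‖ ≤ n * η := (norm_mul_le _ _).trans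
    ((mul_le_of_le_one_left (norm_nonneg _) (by rwa [norm_star])).trans hX)
  linarith [norm_add_le (star (X' - X) * X') (star X * (X' - X))]

/-- For an exactly decoherent family, the operators `Q^n_1(α)` form a resolution indexed by
the histories `α`. -/
lemma isProjectionResolution_histSq_zero (n : ℕ) (k : Fin n → ℕ) (hk : ∀ i, 1 ≤ k i)
    {P : (i : Fin n) → Fin (k i) → A} (hP : ∀ i, IsProjectionResolution (P i))
    (hcomm : ∀ (α : (i : Fin n) → Fin (k i)) (i : Fin n),
      Commute (P i (α i)) (histSq n k P α (i + 1))) :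
    IsProjectionResolution fun α => histSq n k P α 0 := by
  induction n with
  | zero =>
    simp only [histSq_self]
    exact ⟨fun _ => IsSelfAdjoint.one A, fun a b hab => (hab (Subsingleton.elim a b)).elim,
      fun _ => one_mul 1, by simp⟩
  | succ n ih =>
    set Q := fun β : (i : Fin n) → Fin (k i.succ) =>
      histSq n (fun i => k i.succ) (fun i => P i.succ) β 0 with hQdef
    have hQ : IsProjectionResolution Q := by
      refine ih (fun i => k i.succ) (fun i => hk i.succ) (fun i => hP i.succ) fun β i => ?_
      have := hcomm (Fin.cons ⟨0, hk 0⟩ β) i.succ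
      rwa [Fin.val_succ, histSq_succ_succ] at this
    have hPQ : ∀ a β, Commute (P 0 a) (Q β) := by
      intro a β
      have := hcomm (Fin.cons a β) 0
      rwa [Fin.val_zero, histSq_succ_succ] at this
    have heq : ∀ α, histSq (n + 1) k P α 0 = P 0 (α 0) * Q (fun i => α i.succ) := by
      intro α
      rw [histSq_succ_zero, ((hP 0).isSelfAdjoint _).star_eq, mul_assoc]
      change P 0 (α 0) * (Q (fun i => α i.succ) * P 0 (α 0)) = _
      rw [← (hPQ _ _).eq, ← mul_assoc, (hP 0).mul_self]
    have hprod : ∀ a b β γ, P 0 a * Q β * (P 0 b * Q γ) = P 0 a * P 0 b * (Q β * Q γ) := by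
      intro a b β γ
      rw [mul_assoc, ← mul_assoc (Q β), ← (hPQ b β).eq]
      simp only [mul_assoc]
    simp only [heq]
    refine ⟨fun α => ?_, fun α α' hne => ?_, fun α => ?_, ?_⟩
    · exact (IsSelfAdjoint.commute_iff ((hP 0).isSelfAdjoint _) (hQ.isSelfAdjoint _)).1 (hPQ _ _)
    · rw [hprod]
      by_cases h0 : α 0 = α' 0
      · rw [hQ.mul_eq_zero, mul_zero]
        intro h
        exact hne (funext fun i => Fin.cases h0 (fun j => congrFun h j) i)
      · rw [(hP 0).mul_eq_zero _ _ h0, zero_mul]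
    · rw [hprod, (hP 0).mul_self, hQ.mul_self]
    · rw [← Fintype.sum_equiv (Fin.consEquiv fun i => Fin (k i)) (fun p => P 0 p.1 * Q p.2) _
        (fun p => by simp [Fin.consEquiv]), Fintype.sum_prod_type]
      simp only [← Finset.mul_sum, hQ.sum_eq_one, mul_one, (hP 0).sum_eq_one]

/-- Error constants for families of `t` resolutions with at most `M` members each. -/
noncomputable def decoherenceConst (M : ℕ) : ℕ → ℝ
  | 0 => 1
  | t + 1 => 4 * M ^ 3 * M ^ M * (1 + 4 * M * decoherenceConst M t)

lemma decoherenceConst_nonneg (M t : ℕ) : 0 ≤ decoherenceConst M t := by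
  induction t with
  | zero => simp [decoherenceConst]
  | succ t ih =>
    rw [decoherenceConst]
    positivity

lemma decoherenceConst_pos {M : ℕ} (hM : 1 ≤ M) (t : ℕ) : 0 < decoherenceConst M t := by
  cases t with
  | zero => simp [decoherenceConst]
  | succ t =>
    have := decoherenceConst_nonneg M t
    have : (0 : ℝ) < M := by exact_mod_cast hM
    rw [decoherenceConst]
    positivity

lemma decoherenceConst_monotone {M : ℕ} (hM : 1 ≤ M) : Monotone (decoherenceConst M) := by
  refine monotone_nat_of_le_succ fun t => ?_
  have h0 := decoherenceConst_nonneg M t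
  have hM' : (1 : ℝ) ≤ M := by exact_mod_cast hM
  rw [decoherenceConst]
  have h3 : (1 : ℝ) ≤ M ^ 3 := one_le_pow₀ hM'
  have hMM : (1 : ℝ) ≤ (M : ℝ) ^ M := one_le_pow₀ hM'
  have hK : (1 : ℝ) ≤ 4 * M ^ 3 * M ^ M := by nlinarith
  have hB : decoherenceConst M t ≤ 1 + 4 * M * decoherenceConst M t := by nlinarith
  exact hB.trans (le_mul_of_one_le_left (h0.trans hB) hK)

theorem exists_decoherent_near (M n : ℕ) (hn : n ≤ M) (k : Fin n → ℕ) (hk : ∀ i, 1 ≤ k i)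
    (hkM : ∀ i, k i ≤ M) {P : (i : Fin n) → Fin (k i) → A}
    (hP : ∀ i, IsProjectionResolution (P i)) {ε : ℝ} (hε : 0 ≤ ε)
    (hsmall : decoherenceConst M n * ε < 1)
    (hcomm : ∀ (α : (i : Fin n) → Fin (k i)) (i : Fin n),
      ‖P i (α i) * histSq n k P α (i + 1) - histSq n k P α (i + 1) * P i (α i)‖ ≤ ε) :
    ∃ P' : (i : Fin n) → Fin (k i) → A, (∀ i, IsProjectionResolution (P' i)) ∧
      (∀ i a, ‖P' i a - P i a‖ ≤ decoherenceConst M n * ε) ∧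
      ∀ (α : (i : Fin n) → Fin (k i)) (i : Fin n),
        Commute (P' i (α i)) (histSq n k P' α (i + 1)) := by
  induction n with
  | zero => exact ⟨P, hP, fun i => i.elim0, fun _ i => i.elim0⟩
  | succ n ih =>
    have hmono := decoherenceConst_monotone (show 1 ≤ M by omega) n.le_succ
    have hD := decoherenceConst_nonneg M n
    obtain ⟨R, hR, hRn, hRc⟩ := ih (by omega) (fun i => k i.succ) (fun i => hk i.succ)
      (fun i => hkM i.succ) (fun i => hP i.succ)
      ((mul_le_mul_of_nonneg_right hmono hε).trans_lt hsmall) fun β i => by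
        have := hcomm (Fin.cons ⟨0, hk 0⟩ β) i.succ
        rwa [Fin.val_succ, histSq_succ_succ] at this
    have hQ := isProjectionResolution_histSq_zero n _ (fun i => hk i.succ) hR hRc
    have hδ : ∀ a β, ‖P 0 a * histSq n (fun i => k i.succ) R β 0 -
        histSq n (fun i => k i.succ) R β 0 * P 0 a‖ ≤
          (1 + 4 * M * decoherenceConst M n) * ε := by
      intro a β
      have h1 := hcomm (Fin.cons a β) 0
      rw [Fin.val_zero, histSq_succ_succ] at h1
      have h2 := norm_histSq_zero_sub_le n _ (fun i => hP i.succ) hR hRn β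
      simp only [Fin.cons_zero, Fin.cons_succ] at h1
      set S' := histSq n (fun i => k i.succ) R β 0
      set S := histSq n (fun i => k i.succ) (fun i => P i.succ) β 0
      have hid : P 0 a * S' - S' * P 0 a =
          (P 0 a * S - S * P 0 a) + (P 0 a * (S' - S) - (S' - S) * P 0 a) := by noncomm_ring
      have h3 : ‖P 0 a * (S' - S)‖ ≤ ‖S' - S‖ := (norm_mul_le _ _).trans
        (mul_le_of_le_one_left (norm_nonneg _) ((hP 0).norm_le_one _))
      have h4 : ‖(S' - S) * P 0 a‖ ≤ ‖S' - S‖ := (norm_mul_le _ _).trans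
        (mul_le_of_le_one_right (norm_nonneg _) ((hP 0).norm_le_one _))
      have hnM : (n : ℝ) * (decoherenceConst M n * ε) ≤ M * (decoherenceConst M n * ε) := by
        gcongr
        omega
      rw [hid]
      linarith [norm_add_le (P 0 a * S - S * P 0 a) (P 0 a * (S' - S) - (S' - S) * P 0 a),
        norm_sub_le (P 0 a * (S' - S)) ((S' - S) * P 0 a)]
    have hcard : (Fintype.card ((i : Fin n) → Fin (k i.succ)) : ℝ) ≤ (M : ℝ) ^ M := by
      rw [Fintype.card_pi]
      simp only [Fintype.card_fin]
      have h1 : ∏ i : Fin n, k i.succ ≤ M ^ n := by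
        simpa using Finset.prod_le_pow_card Finset.univ (fun i : Fin n => k i.succ) M
          fun i _ => hkM i.succ
      have h2 : M ^ n ≤ M ^ M := Nat.pow_le_pow_right (by omega) (by omega)
      exact_mod_cast h1.trans h2
    have hk0 : (k 0 : ℝ) ≤ M := by exact_mod_cast hkM 0
    have hbound : 4 * (k 0 : ℝ) * (Fintype.card ((i : Fin n) → Fin (k i.succ)) *
        (k 0 * (k 0 * ((1 + 4 * M * decoherenceConst M n) * ε)))) ≤
          decoherenceConst M (n + 1) * ε := by
      calc _ ≤ 4 * (M : ℝ) * (M ^ M *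
            (M * (M * ((1 + 4 * M * decoherenceConst M n) * ε)))) := by gcongr
        _ = _ := by
          rw [decoherenceConst]
          ring
    obtain ⟨E, hE, hEc, hEn⟩ := (hP 0).exists_commute_of_norm_commutator_le hQ hδ
      (hbound.trans_lt hsmall)
    refine ⟨Fin.cons E R, fun i => ?_, fun i => ?_, fun α i => ?_⟩
    · exact Fin.cases hE hR i
    · refine Fin.cases (fun a => (hEn a).trans hbound) (fun j a => ?_) i
      exact (hRn j a).trans (mul_le_mul_of_nonneg_right hmono hε)
    · refine Fin.cases ?_ (fun j => ?_) i
      · rw [Fin.val_zero, histSq_succ_succ]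
        exact hEc _ _
      · rw [Fin.val_succ, histSq_succ_succ]
        exact hRc (fun i => α i.succ) j

end History

/-- Theorem 4.1: there is a constant `C > 0`, depending only on `k₁ + ⋯ + kₙ`, such
that any family of complete systems of mutually orthogonal self-adjoint projections
`{Π^{(i)}_α}` on a complex Hilbert space whose commutators `[Π^{(i)}_{α_i}, Q^n_{i+1}(α)]`
all have norm `< ε`, with `C·ε < 1`, can be perturbed by at most `C·ε` in norm into a
family of complete systems of mutually orthogonal self-adjoint projections `{Π̃^{(i)}_α}`
with `[Π̃^{(i)}_{α_i}, Q̃^n_{i+1}(α)] = 0` for all histories `α` and all `i = 1,…,n−1`. -/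
theorem exact_decoherence_from_approximate_decoherence :
    ∃ C : ℕ → ℝ, (∀ m, 0 < C m) ∧
      ∀ (H : Type u) [NormedAddCommGroup H] [InnerProductSpace ℂ H] [CompleteSpace H]
        (n : ℕ), 1 ≤ n → ∀ (k : Fin n → ℕ), (∀ i, 1 ≤ k i) →
        ∀ P : (i : Fin n) → Fin (k i) → (H →L[ℂ] H),
        (∀ i a, IsSelfAdjoint (P i a)) →
        (∀ i a b, a ≠ b → P i a * P i b = 0) →
        (∀ i a, P i a * P i a = P i a) →
        (∀ i, ∑ a, P i a = 1) →
        ∀ ε : ℝ, 0 < ε → C (∑ i, k i) * ε < 1 →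
        (∀ (α : (i : Fin n) → Fin (k i)) (i : ℕ) (h : i + 1 < n),
          ‖P ⟨i, by omega⟩ (α ⟨i, by omega⟩) * Qop n k P α (i + 1) -
            Qop n k P α (i + 1) * P ⟨i, by omega⟩ (α ⟨i, by omega⟩)‖ < ε) →
        ∃ Pt : (i : Fin n) → Fin (k i) → (H →L[ℂ] H),
          (∀ i a, IsSelfAdjoint (Pt i a)) ∧
          (∀ i a b, a ≠ b → Pt i a * Pt i b = 0) ∧
          (∀ i a, Pt i a * Pt i a = Pt i a) ∧
          (∀ i, ∑ a, Pt i a = 1) ∧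
          (∀ i a, ‖Pt i a - P i a‖ ≤ C (∑ i, k i) * ε) ∧
          (∀ (α : (i : Fin n) → Fin (k i)) (i : ℕ) (h : i + 1 < n),
            Pt ⟨i, by omega⟩ (α ⟨i, by omega⟩) * Qop n k Pt α (i + 1) =
              Qop n k Pt α (i + 1) * Pt ⟨i, by omega⟩ (α ⟨i, by omega⟩)) := by
  refine ⟨fun m => decoherenceConst m m, fun m => ?_, ?_⟩
  · cases m with
    | zero => simp [decoherenceConst]
    | succ m => exact decoherenceConst_pos (by omega) _
  intro H _ _ _ n hn k hk P hsa horth hidem hsum ε hε hsmall hcomm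
  have hkM : ∀ i, k i ≤ ∑ i, k i := fun i =>
    Finset.single_le_sum (f := k) (fun _ _ => Nat.zero_le _) (Finset.mem_univ i)
  have hnM : n ≤ ∑ i, k i := by
    simpa using Finset.sum_le_sum fun i (_ : i ∈ Finset.univ) => hk i
  have hmono := mul_le_mul_of_nonneg_right
    (decoherenceConst_monotone (hn.trans hnM) hnM) hε.le
  obtain ⟨P', hP', hn', hc'⟩ := exists_decoherent_near (∑ i, k i) n hnM k hk hkM
    (fun i => ⟨hsa i, horth i, hidem i, hsum i⟩) hε.le (hmono.trans_lt hsmall) fun α i => by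
      by_cases h : (i : ℕ) + 1 < n
      · exact (hcomm α i h).le
      · have hi : (i : ℕ) + 1 = n := by omega
        rw [hi, histSq_self]
        simpa using hε.le
  exact ⟨P', fun i => (hP' i).isSelfAdjoint, fun i => (hP' i).mul_eq_zero,
    fun i => (hP' i).mul_self, fun i => (hP' i).sum_eq_one,
    fun i a => (hn' i a).trans hmono, fun α i h => hc' α ⟨i, by omega⟩⟩
end

section
/- Let a be a Hermitian d×d complex matrix, let Π be a self-adjoint projection of rank n ≥ 1, and set ā := Tr(Π a)/n. If ε > 0 and (1/n)·Tr(Π (a − ā·1)²) < ε², then a has an eigenvalue α with |α − ā| < ε. -/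
open scoped ComplexOrder

namespace Matrix

variable {m : Type*} [Fintype m]

/-- If every eigenvalue of a Hermitian matrix `A` is at distance at least `ε` from the real
number `c`, then `(A - c)² ≥ ε²` in the Loewner order. -/
lemma IsHermitian.posSemidef_sub_smul_one_sq_sub [DecidableEq m] {A : Matrix m m ℂ}
    (hA : A.IsHermitian) {c ε : ℝ} (hε : 0 ≤ ε) (h : ∀ i, ε ≤ |hA.eigenvalues i - c|) :
    ((A - (c : ℂ) • 1) * (A - (c : ℂ) • 1) - ((ε ^ 2 : ℝ) : ℂ) • 1).PosSemidef := by
  have hdiag : (diagonal fun i ↦ (((hA.eigenvalues i - c) ^ 2 - ε ^ 2 : ℝ) : ℂ)).PosSemidef := by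
    refine PosSemidef.diagonal fun i ↦ ?_
    have hsq : ε ^ 2 ≤ (hA.eigenvalues i - c) ^ 2 := by
      rw [← sq_abs (hA.eigenvalues i - c)]
      exact pow_le_pow_left₀ hε (h i) 2
    exact Complex.zero_le_real.mpr (sub_nonneg.mpr hsq)
  have hconj : (A - (c : ℂ) • 1) * (A - (c : ℂ) • 1) - ((ε ^ 2 : ℝ) : ℂ) • 1 =
      Unitary.conjStarAlgAut ℂ _ hA.eigenvectorUnitary
        (diagonal fun i ↦ (((hA.eigenvalues i - c) ^ 2 - ε ^ 2 : ℝ) : ℂ)) := by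
    have hD : (diagonal fun i ↦ (((hA.eigenvalues i - c) ^ 2 - ε ^ 2 : ℝ) : ℂ)) =
        (diagonal (RCLike.ofReal ∘ hA.eigenvalues) - (c : ℂ) • 1) *
          (diagonal (RCLike.ofReal ∘ hA.eigenvalues) - (c : ℂ) • 1) -
            ((ε ^ 2 : ℝ) : ℂ) • (1 : Matrix m m ℂ) := by
      simp only [smul_one_eq_diagonal, diagonal_sub, diagonal_mul_diagonal]
      congr 1
      ext i
      simp [sq]
    rw [hD]
    simp only [map_sub, map_mul, map_smul, map_one, ← hA.spectral_theorem]
  rw [hconj, Unitary.conjStarAlgAut_apply]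
  exact hdiag.mul_mul_conjTranspose_same _

/-- The trace of a positive semidefinite matrix compressed by an orthogonal projection is
nonnegative. -/
lemma PosSemidef.trace_proj_mul_nonneg {M P : Matrix m m ℂ} (hM : M.PosSemidef)
    (hP : P.IsHermitian) (hPP : P * P = P) : 0 ≤ (P * M).trace := by
  have h := (hM.conjTranspose_mul_mul_same P).trace_nonneg
  rwa [hP.eq, trace_mul_comm, ← mul_assoc, hPP] at h

end Matrix

/-- If `a` is a Hermitian `d×d` matrix, `P` a self-adjoint projection of rank `n ≥ 1`,
`ā = Tr(P a)/n`, and `(1/n)·Tr(P (a − ā·1)²) < ε²`, then `a` has an eigenvalue `α`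
with `|α − ā| < ε`. -/
theorem eigenvalue_near_block_average {d : ℕ} (hd : 1 ≤ d)
    (a : Matrix (Fin d) (Fin d) ℂ) (ha : a.IsHermitian)
    (P : Matrix (Fin d) (Fin d) ℂ) (hPsa : P.IsHermitian) (hPidem : P * P = P)
    (n : ℕ) (hn : 1 ≤ n) (hrank : P.trace = (n : ℂ))
    (ε : ℝ) (hε : 0 < ε) :
    let abar : ℝ := ((P * a).trace).re / n
    ((P * ((a - (abar : ℂ) • 1) * (a - (abar : ℂ) • 1))).trace).re / n < ε ^ 2 →
      ∃ α : ℝ, (α : ℂ) ∈ spectrum ℂ a ∧ |α - abar| < ε := by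
  intro abar hvar
  by_contra! hfar
  have hgap : ∀ i, ε ≤ |ha.eigenvalues i - abar| := fun i ↦
    hfar _ (spectrum.algebraMap_mem ℂ (ha.eigenvalues_mem_spectrum_real i))
  have htrace := (ha.posSemidef_sub_smul_one_sq_sub hε.le hgap).trace_proj_mul_nonneg hPsa hPidem
  rw [mul_sub, Matrix.trace_sub, mul_smul_comm, mul_one, Matrix.trace_smul, hrank] at htrace
  have hre := (Complex.le_def.mp htrace).1
  rw [Complex.zero_re, Complex.sub_re, smul_eq_mul, Complex.re_ofReal_mul, Complex.natCast_re]
    at hre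
  have hn' : (0 : ℝ) < n := by exact_mod_cast hn
  rw [div_lt_iff₀ hn'] at hvar
  linarith
end

section
/- Let ρ be a density matrix on ℂ^d with spectral decomposition ρ = Σ_{λ} p_λ Π_λ, where the p_λ are the distinct eigenvalues of ρ and Π_λ the corresponding spectral projections of ranks n_λ. For a Hermitian d×d matrix a define a^ω := Σ_{λ} (Tr(Π_λ a)/n_λ)·Π_λ and the variance (Δ a)² := Tr(ρ (a − a^ω)²). If Δ a = 0, then a belongs to the centralizer of ω, i.e. Tr(ρ (ab − ba)) = 0 for every d×d matrix b. -/
open scoped ComplexOrder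

open scoped Matrix MatrixOrder in
/-- A positive semidefinite `ρ` with `Tr(ρ x²) = 0` for a Hermitian `x` commutes with `x`. -/
theorem Matrix.PosSemidef.commute_of_trace_mul_sq_eq_zero {n : Type*} [Fintype n]
    {ρ x : Matrix n n ℂ} (hρ : ρ.PosSemidef) (hx : x.IsHermitian)
    (h : (ρ * (x * x)).trace = 0) : Commute ρ x := by
  classical
  obtain ⟨c, hc⟩ := CStarAlgebra.nonneg_iff_eq_star_mul_self.mp hρ.nonneg
  rw [Matrix.star_eq_conjTranspose] at hc
  have hcx : c * x = 0 := by
    rw [← Matrix.trace_conjTranspose_mul_self_eq_zero_iff, Matrix.conjTranspose_mul, hx.eq,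
      ← h, hc, ← Matrix.mul_assoc (cᴴ * c), Matrix.trace_mul_comm _ x]
    simp only [Matrix.mul_assoc]
  have hρx : ρ * x = 0 := by rw [hc, Matrix.mul_assoc, hcx, Matrix.mul_zero]
  have hxρ : x * ρ = 0 := by
    simpa [hρ.isHermitian.eq, hx.eq] using congrArg Matrix.conjTranspose hρx
  exact hρx.trans hxρ.symm

/-- The trace of a product of two Hermitian matrices is real. -/
theorem Matrix.IsHermitian.star_trace_mul {n : Type*} [Fintype n] {x y : Matrix n n ℂ}
    (hx : x.IsHermitian) (hy : y.IsHermitian) : star (x * y).trace = (x * y).trace := by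
  rw [← Matrix.trace_conjTranspose, Matrix.conjTranspose_mul, hx.eq, hy.eq, Matrix.trace_mul_comm]

/-- A matrix commuting with `ρ` lies in the centralizer of the functional `Tr(ρ ·)`. -/
theorem Matrix.trace_mul_commutator_eq_zero {n : Type*} [Fintype n] {ρ a : Matrix n n ℂ}
    (h : Commute ρ a) (b : Matrix n n ℂ) : (ρ * (a * b - b * a)).trace = 0 := by
  rw [Matrix.mul_sub, Matrix.trace_sub, ← Matrix.mul_assoc, ← Matrix.mul_assoc,
    Matrix.trace_mul_comm (ρ * b) a, ← Matrix.mul_assoc, h.eq, sub_self]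

/-- If the variance `Δa² = Tr(ρ (a − a^ω)²)` of a Hermitian matrix `a` vanishes,
where `a^ω = Σ_λ (Tr(Π_λ a)/n_λ)·Π_λ` is built from the spectral decomposition
`ρ = Σ_λ p_λ Π_λ` of the density matrix, then `a` lies in the centralizer of the
state `ω = Tr(ρ ·)`. -/
theorem zero_variance_implies_centralizer {d : ℕ} (hd : 1 ≤ d)
    (ρ : Matrix (Fin d) (Fin d) ℂ) (hρ : ρ.PosSemidef) (htr : ρ.trace = 1)
    {k : ℕ} (p : Fin k → ℝ) (hp : Function.Injective p)
    (P : Fin k → Matrix (Fin d) (Fin d) ℂ)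
    (hPsa : ∀ l, (P l).IsHermitian)
    (hPorth : ∀ l m, l ≠ m → P l * P m = 0)
    (hPidem : ∀ l, P l * P l = P l)
    (hPsum : ∑ l, P l = 1)
    (hspec : ρ = ∑ l, (p l : ℂ) • P l)
    (nl : Fin k → ℕ) (hnl : ∀ l, 0 < nl l) (hranks : ∀ l, (P l).trace = (nl l : ℂ))
    (a : Matrix (Fin d) (Fin d) ℂ) (ha : a.IsHermitian) :
    let aω : Matrix (Fin d) (Fin d) ℂ := ∑ l, ((P l * a).trace / (nl l : ℂ)) • P l
    (ρ * ((a - aω) * (a - aω))).trace = 0 →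
      ∀ b : Matrix (Fin d) (Fin d) ℂ, (ρ * (a * b - b * a)).trace = 0 := by
  intro aω h
  have hcomm : Commute ρ aω := by
    rw [hspec]
    refine Commute.sum_left _ _ _ fun l _ => Commute.sum_right _ _ _ fun m _ => ?_
    refine Commute.smul_left (Commute.smul_right ?_ _) _
    rcases eq_or_ne l m with rfl | hlm
    · exact Commute.refl _
    · exact (hPorth l m hlm).trans (hPorth m l hlm.symm).symm
  have haω : aω.IsHermitian := by
    simp only [aω, Matrix.IsHermitian, Matrix.conjTranspose_sum, Matrix.conjTranspose_smul,
      star_div₀, (hPsa _).star_trace_mul ha, (hPsa _).eq, star_natCast]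
  have hx := hρ.commute_of_trace_mul_sq_eq_zero (ha.sub haω) h
  exact Matrix.trace_mul_commutator_eq_zero (by simpa using hx.add_right hcomm)
end

section
/- Let ρ be a density matrix on ℂ^d and, for i = 1,…,n, let {Π^{(i)}_α}_{α=1}^{k_i} be d×d self-adjoint projections with Π^{(i)}_α Π^{(i)}_β = 0 for α ≠ β and Σ_{α=1}^{k_i} Π^{(i)}_α = 1. Suppose the family of histories is consistent, i.e. [Π^{(i)}_β, H^n_{i+1}(α)] = 0 for every i = 1,…,n−1, every β = 1,…,k_i, and every multi-index α. Then the decoherence matrix P^ω_{α,α'} := ω( Π^{(1)}_{α_1} ⋯ Π^{(n)}_{α_n} Π^{(n)}_{α'_n} ⋯ Π^{(1)}_{α'_1} ) is diagonal: P^ω_{α,α'} = 0 whenever α_n = α'_n and α ≠ α'. -/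
open scoped ComplexOrder

theorem histOp_of_lt {M : Type*} [Monoid M] {n : ℕ} (k : Fin n → ℕ)
    (P : (i : Fin n) → Fin (k i) → M) (α : (i : Fin n) → Fin (k i)) {j : ℕ} (h : j < n) :
    histOp n k P α j = histOp n k P α (j + 1) * P ⟨j, h⟩ (α ⟨j, h⟩) := by
  rw [histOp, dif_pos h]

theorem histOp_of_le {M : Type*} [Monoid M] {n : ℕ} (k : Fin n → ℕ)
    (P : (i : Fin n) → Fin (k i) → M) (α : (i : Fin n) → Fin (k i)) {j : ℕ} (h : n ≤ j) :
    histOp n k P α j = 1 := by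
  rw [histOp, dif_neg (not_lt.mpr h)]

/-- Histories that differ at time `i` are orthogonal as soon as the projections at time `i` are
orthogonal and commute with the later part of each history. -/
theorem star_histOp_mul_histOp_eq_zero_of_ne {M : Type*} [MonoidWithZero M] [StarMul M] {n : ℕ}
    (k : Fin n → ℕ) (P : (i : Fin n) → Fin (k i) → M) (i : Fin n)
    (hsa : ∀ a, IsSelfAdjoint (P i a)) (horth : ∀ a b, a ≠ b → P i a * P i b = 0)
    (hcomm : ∀ β α, Commute (P i β) (histOp n k P α (i + 1)))
    {α α' : (i : Fin n) → Fin (k i)} (hne : α i ≠ α' i) :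
    star (histOp n k P α i) * histOp n k P α' i = 0 := by
  rw [histOp_of_lt k P α i.isLt, histOp_of_lt k P α' i.isLt, star_mul, (hsa _).star_eq,
    ← (hcomm (α' i) α').eq, ← mul_assoc, mul_assoc (P i (α i))]
  have hstar : star (histOp n k P α (i + 1)) * P i (α' i) =
      P i (α' i) * star (histOp n k P α (i + 1)) := by
    simpa only [star_mul, (hsa _).star_eq] using congrArg star (hcomm (α' i) α).eq
  rw [hstar, ← mul_assoc, horth _ _ hne, zero_mul, zero_mul]

/-- Orthogonality of the later parts of two histories propagates to all earlier times. -/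
theorem star_histOp_mul_histOp_eq_zero_of_le {M : Type*} [MonoidWithZero M] [StarMul M] {n : ℕ}
    (k : Fin n → ℕ) (P : (i : Fin n) → Fin (k i) → M) {α α' : (i : Fin n) → Fin (k i)}
    {i j : ℕ} (hji : j ≤ i) (hi : i ≤ n)
    (h : star (histOp n k P α i) * histOp n k P α' i = 0) :
    star (histOp n k P α j) * histOp n k P α' j = 0 := by
  induction i, hji using Nat.le_induction with
  | base => exact h
  | succ i _ ih =>
    refine ih (by omega) ?_
    rw [histOp_of_lt k P α hi, histOp_of_lt k P α' hi, star_mul, mul_assoc,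
      ← mul_assoc (star (histOp n k P α (i + 1))), h, zero_mul, mul_zero]

/-- For a consistent family of histories (each `Π^{(i)}_β` commutes with
`H^n_{i+1}(α)`), the decoherence matrix
`P^ω_{α,α'} = ω(H^n_1(α)* H^n_1(α'))` is diagonal: it vanishes whenever
`α_n = α'_n` but `α ≠ α'`. -/
theorem consistent_histories_decoherence_matrix_diagonal {d : ℕ} (hd : 1 ≤ d)
    (ρ : Matrix (Fin d) (Fin d) ℂ) (hρ : ρ.PosSemidef) (htr : ρ.trace = 1)
    (n : ℕ) (hn : 0 < n) (k : Fin n → ℕ) (hk : ∀ i, 1 ≤ k i)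
    (P : (i : Fin n) → Fin (k i) → Matrix (Fin d) (Fin d) ℂ)
    (hPsa : ∀ i a, (P i a).IsHermitian)
    (hPorth : ∀ i a b, a ≠ b → P i a * P i b = 0)
    (hPidem : ∀ i a, P i a * P i a = P i a)
    (hPsum : ∀ i, ∑ a, P i a = 1)
    (hcons : ∀ (i : ℕ) (h : i + 1 < n) (β : Fin (k ⟨i, by omega⟩))
        (α : (i : Fin n) → Fin (k i)),
      P ⟨i, by omega⟩ β * histOp n k P α (i + 1) =
        histOp n k P α (i + 1) * P ⟨i, by omega⟩ β) :
    ∀ α α' : (i : Fin n) → Fin (k i),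
      α ⟨n - 1, by omega⟩ = α' ⟨n - 1, by omega⟩ → α ≠ α' →
        (ρ * (star (histOp n k P α 0) * histOp n k P α' 0)).trace = 0 := by
  intro α α' _ hne
  obtain ⟨i, hi⟩ := Function.ne_iff.mp hne
  have hcomm : ∀ β γ, Commute (P i β) (histOp n k P γ (i + 1)) := fun β γ => by
    by_cases h : (i : ℕ) + 1 < n
    · exact hcons i h β γ
    · rw [histOp_of_le k P γ (not_lt.mp h)]
      exact Commute.one_right _
  have hzero := star_histOp_mul_histOp_eq_zero_of_ne k P i (fun a => hPsa i a) (hPorth i) hcomm hi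
  rw [star_histOp_mul_histOp_eq_zero_of_le k P (Nat.zero_le _) i.isLt.le hzero, mul_zero,
    Matrix.trace_zero]
end

section
/- Let A and Ξ be finite nonempty types, let q : Ξ × A → ℝ be nonnegative, and let p : A → ℝ be nonnegative with Σ_α p(α) = 1. Suppose the fixed-point equation p(α) · Σ_β p(β)·q(ξ, β) = p(α) · q(ξ, α) holds for every α ∈ A and every ξ ∈ Ξ, and suppose the non-degeneracy condition holds: for any two distinct α, β ∈ A there exists ξ ∈ Ξ with q(ξ, α) ≠ q(ξ, β). Then p is a point mass: there exists α₀ ∈ A with p(α₀) = 1 and p(α) = 0 for all α ≠ α₀. -/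
/-- A limiting posterior distribution of a non-degenerate indirect (non-demolition)
measurement is a point mass: if `p(α)·Σ_β p(β)q(ξ,β) = p(α)·q(ξ,α)` for all `α, ξ`,
and for any two distinct `α, β` there is a probe outcome `ξ` with `q(ξ,α) ≠ q(ξ,β)`,
then `p = δ_{α₀}` for some `α₀`. -/
theorem limiting_posterior_is_point_mass {A Ξ : Type*} [Fintype A] [Nonempty A]
    [Fintype Ξ] [Nonempty Ξ]
    (q : Ξ × A → ℝ) (hq : ∀ ξ α, 0 ≤ q (ξ, α))
    (p : A → ℝ) (hp : ∀ α, 0 ≤ p α) (hpsum : ∑ α, p α = 1)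
    (hfix : ∀ α ξ, p α * (∑ β, p β * q (ξ, β)) = p α * q (ξ, α))
    (hnondeg : ∀ α β, α ≠ β → ∃ ξ, q (ξ, α) ≠ q (ξ, β)) :
    ∃ α₀ : A, p α₀ = 1 ∧ ∀ α, α ≠ α₀ → p α = 0 := by
  obtain ⟨α₀, -, h₀⟩ : ∃ α ∈ Finset.univ, p α ≠ 0 :=
    Finset.exists_ne_zero_of_sum_ne_zero (by rw [hpsum]; exact one_ne_zero)
  have hzero : ∀ α, α ≠ α₀ → p α = 0 := by
    intro α hne
    by_contra hα
    obtain ⟨ξ, hξ⟩ := hnondeg α α₀ hne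
    exact hξ ((mul_left_cancel₀ hα (hfix α ξ)).symm.trans (mul_left_cancel₀ h₀ (hfix α₀ ξ)))
  exact ⟨α₀, (Fintype.sum_eq_single α₀ hzero).symm.trans hpsum, hzero⟩
end
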